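/- arXiv:1912.06897 — 5 statements merged into one kernel-verified Lean document; each statement's English description precedes it below -/
import Mathlib

section
/- Let A be a finite invertible Mealy automaton over X. Then the group G_A is finite if and only if the group G_{C(A)} generated by the circuit part C(A) of A is finite. -/
/-- A Mealy automaton over alphabet `X` with state set `S`:
the transition-output function sends `(s, x)` to `(output letter, next state)`. -/
structure Mealy (S X : Type*) where
  step : S → X → X × S

namespace Mealy

variable {S X : Type*}

/-- The section `s|_v`: the state reached after processing the word `v` from state `s`. -/
def sec (A : Mealy S X) (s : S) : List X → S
  | [] => s
  | x :: v => A.sec (A.step s x).2 v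

/-- The action of a state on finite words (lists of letters, read left to right). -/
def act (A : Mealy S X) (s : S) : List X → List X
  | [] => []
  | x :: v => (A.step s x).1 :: A.act (A.step s x).2 v

/-- A state is trivial if it acts on `X^*` as the identity. -/
def IsTrivialState (A : Mealy S X) (s : S) : Prop := ∀ v : List X, A.act s v = v

/-- An automaton is invertible if every state acts on the letters by a permutation. -/
def Invertible (A : Mealy S X) : Prop :=
  ∀ s : S, Function.Bijective fun x : X => (A.step s x).1

/-- The automaton group `G_A`: the subgroup of permutations of `X^*` generated by
the permutations defined by the states of `A`. -/
def autGroup (A : Mealy S X) : Subgroup (Equiv.Perm (List X)) :=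
  Subgroup.closure { f : Equiv.Perm (List X) | ∃ s : S, ∀ v : List X, f v = A.act s v }

/-- A left-infinite sequence `…x₂x₁` is encoded as `p : ℕ → X` with `p 0 = x₁`, `p 1 = x₂`, ….
It is post-critical if it is the sequence of input labels or of output labels of a
left-infinite directed path in `A` ending at a non-trivial state. -/
def IsPostCritical (A : Mealy S X) (p : ℕ → X) : Prop :=
  ∃ (σ : ℕ → S) (inp out : ℕ → X),
    (∀ n, A.step (σ (n + 1)) (inp n) = (out n, σ n)) ∧
      ¬A.IsTrivialState (σ 0) ∧ (p = inp ∨ p = out)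

/-- The post-critical set of `A`. -/
def PostCriticalSet (A : Mealy S X) : Set (ℕ → X) := { p | A.IsPostCritical p }

/-- An automaton is bounded if its post-critical set is finite. -/
def Bounded (A : Mealy S X) : Prop := A.PostCriticalSet.Finite

/-- The length-`n` suffix (as a finite word, read left to right) of a left-infinite
sequence `…x₂x₁` encoded as `p : ℕ → X`: the word `xₙ…x₂x₁`. -/
def lsuffix (p : ℕ → X) (n : ℕ) : List X := (List.range n).reverse.map p

/-- A finite word is post-critical if it is a suffix of some post-critical sequence. -/
def IsPostCriticalWord (A : Mealy S X) (v : List X) : Prop :=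
  ∃ p : ℕ → X, A.IsPostCritical p ∧ v = lsuffix p v.length

/-- The base relation for `e`-equivalence: `v ≈ u` if some state `s` satisfies
`s|_v` trivial and `s(v) = u`, or `s|_u` trivial and `s(u) = v`. -/
def ERel (A : Mealy S X) (v u : List X) : Prop :=
  ∃ s : S, (A.IsTrivialState (A.sec s v) ∧ A.act s v = u) ∨
    (A.IsTrivialState (A.sec s u) ∧ A.act s u = v)

/-- `e`-equivalence: the equivalence relation generated by `≈`. -/
def EEquiv (A : Mealy S X) : List X → List X → Prop := Relation.EqvGen A.ERel

/-- The `e`-orbit of a word. -/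
def eOrbit (A : Mealy S X) (v : List X) : Set (List X) := { u | A.EEquiv v u }

/-- The orbit of a finite word under the automaton group. -/
def orbit (A : Mealy S X) (v : List X) : Set (List X) := { u | ∃ g ∈ A.autGroup, g v = u }

/-- Reachability by a directed path in the automaton. -/
def Reaches (A : Mealy S X) : S → S → Prop :=
  Relation.ReflTransGen fun a b => ∃ x : X, (A.step a x).2 = b

/-- The states of the circuit part `C(A)`: states reachable by a directed path
from some directed cycle of `A`. -/
def circuitStates (A : Mealy S X) : Set S :=
  { s | ∃ t : S, (∃ x : X, A.Reaches (A.step t x).2 t) ∧ A.Reaches t s }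

/-- The circuit part `C(A)` as a subautomaton. -/
def circuitPart (A : Mealy S X) : Mealy A.circuitStates X where
  step s x :=
    ((A.step s.1 x).1,
      ⟨(A.step s.1 x).2, by
        obtain ⟨t, hc, hr⟩ := s.2
        exact ⟨t, hc, hr.tail ⟨x, rfl⟩⟩⟩)

/-- The subautomaton induced on a subset of states closed under transitions. -/
def subautomaton (A : Mealy S X) (T : Set S)
    (hT : ∀ s ∈ T, ∀ x : X, (A.step s x).2 ∈ T) : Mealy T X where
  step s x := ((A.step s.1 x).1, ⟨(A.step s.1 x).2, hT s.1 s.2 x⟩)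

/-- The extension of a length- and prefix-preserving map on finite words to
right-infinite sequences (letter by letter). -/
def extOmega (f : List X → List X) (w : ℕ → X) : ℕ → X :=
  fun n => (f ((List.range (n + 1)).map w)).getD n (w n)

/-- The orbit of a right-infinite sequence under the automaton group. -/
def orbitOmega (A : Mealy S X) (w : ℕ → X) : Set (ℕ → X) :=
  { w' | ∃ g ∈ A.autGroup, w' = extOmega (⇑(g : Equiv.Perm (List X))) w }

/-- The group `G_A` is level-transitive if it acts transitively on each level `X^n`. -/
def LevelTransitive (A : Mealy S X) : Prop :=
  ∀ v u : List X, v.length = u.length → ∃ g ∈ A.autGroup, g v = u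

end Mealy

/-- The run of a deterministic finite-state machine on a right-infinite input:
`dfaRun δ q₀ w n` is the state after reading the first `n` letters. -/
def dfaRun {Q X : Type*} (δ : Q → X → Q) (q₀ : Q) (w : ℕ → X) : ℕ → Q
  | 0 => q₀
  | n + 1 => δ (dfaRun δ q₀ w n) (w n)

/-- A concrete encoding of an invertible Mealy automaton (with state set `Fin n`
over alphabet `Fin k`) as a natural number. -/
def encodeAut (n k : ℕ) (step : Fin n → Fin k → Fin k × Fin n) : ℕ :=
  Nat.pair n (Nat.pair k (Encodable.encode
    ((List.finRange n).flatMap fun s =>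
      (List.finRange k).map fun x =>
        Nat.pair ((step s x).1 : ℕ) ((step s x).2 : ℕ))))

/-!
A path with at least `|S|` edges runs around a directed cycle, so every section of a state at a
word of length `|S|` is a state of the circuit part. Hence each `g ∈ G_A` is determined by its
action on the words of length at most `|S|`, together with its sections at the words of length
`|S|`, which lie in `G_{C(A)}`; if the latter group is finite, only finitely many `g` are possible.
By its definition `autGroup` is generated by those states that act bijectively, and a section of
such a state acts bijectively as well.
-/

namespace Mealy

variable {S X : Type*}

section Action

theorem length_act (A : Mealy S X) (s : S) (v : List X) : (A.act s v).length = v.length := by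
  induction v generalizing s with
  | nil => rfl
  | cons x v ih => simp only [act, List.length_cons, ih]

theorem act_append (A : Mealy S X) (s : S) (v w : List X) :
    A.act s (v ++ w) = A.act s v ++ A.act (A.sec s v) w := by
  induction v generalizing s with
  | nil => rfl
  | cons x v ih => simp only [act, sec, List.cons_append, ih]

theorem act_subautomaton (A : Mealy S X) {T : Set S} (hT : ∀ s ∈ T, ∀ x : X, (A.step s x).2 ∈ T)
    (s : T) (v : List X) : (A.subautomaton T hT).act s v = A.act s v := by
  induction v generalizing s with
  | nil => rfl
  | cons x v ih => exact congrArg ((A.step s x).1 :: ·) (ih _)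

theorem bijective_act_sec (A : Mealy S X) {s : S} (hs : Function.Bijective (A.act s))
    (v : List X) : Function.Bijective (A.act (A.sec s v)) := by
  refine ⟨fun w w' hw => ?_, fun u => ?_⟩
  · have : A.act s (v ++ w) = A.act s (v ++ w') := by rw [act_append, act_append, hw]
    exact List.append_cancel_left (hs.injective this)
  · obtain ⟨w, hw⟩ := hs.surjective (A.act s v ++ u)
    have hlen : v.length ≤ w.length := by
      rw [← A.length_act s w, hw, List.length_append, length_act]
      exact Nat.le_add_right _ _
    rw [← List.take_append_drop v.length w, act_append] at hw
    obtain ⟨hprefix, hsuffix⟩ :=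
      List.append_inj hw (by rw [length_act, length_act, List.length_take_of_le hlen])
    exact ⟨w.drop v.length, by rwa [hs.injective hprefix] at hsuffix⟩

end Action

section Circuits

theorem reaches_sec (A : Mealy S X) (s : S) (v : List X) : A.Reaches s (A.sec s v) := by
  induction v generalizing s with
  | nil => exact .refl
  | cons x v ih => exact .head ⟨x, rfl⟩ (ih _)

theorem mem_circuitStates_of_sec_eq_self (A : Mealy S X) {s : S} {v : List X} (hv : v ≠ [])
    (hs : A.sec s v = s) : s ∈ A.circuitStates := by
  obtain ⟨x, v, rfl⟩ := List.exists_cons_of_ne_nil hv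
  have hcycle : A.Reaches (A.step s x).2 (A.sec s (x :: v)) := A.reaches_sec _ v
  rw [hs] at hcycle
  exact ⟨s, ⟨x, hcycle⟩, .refl⟩

theorem sec_mem_circuitStates (A : Mealy S X) {s : S} (hs : s ∈ A.circuitStates) (v : List X) :
    A.sec s v ∈ A.circuitStates := by
  obtain ⟨t, hcycle, hts⟩ := hs
  exact ⟨t, hcycle, hts.trans (A.reaches_sec s v)⟩

theorem sec_eq_foldl (A : Mealy S X) (s : S) (v : List X) :
    A.sec s v = v.foldl (fun t x => (A.step t x).2) s := by
  induction v generalizing s with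
  | nil => rfl
  | cons _ _ ih => exact ih _

theorem sec_mem_circuitStates_of_card_le_length [Fintype S] (A : Mealy S X) (s : S) {v : List X}
    (hv : Fintype.card S ≤ v.length) : A.sec s v ∈ A.circuitStates := by
  let M : DFA X S := ⟨fun t x => (A.step t x).2, s, ∅⟩
  have sec_eq (t : S) (u : List X) : M.evalFrom t u = A.sec t u := (A.sec_eq_foldl t u).symm
  obtain ⟨q, -, loop, tail, -, -, hloop, -, hq, htail⟩ := M.evalFrom_split hv (sec_eq s v)
  rw [sec_eq] at hq htail
  rw [← htail]
  exact A.sec_mem_circuitStates (A.mem_circuitStates_of_sec_eq_self hloop hq) tail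

end Circuits

section Sections

/-- `IsSection g v h` says that `h` is the section `g|_v` of the permutation `g` at the word `v`,
in the relational form `g (vw) = g(v) h(w)`. -/
def IsSection (g : Equiv.Perm (List X)) (v : List X) (h : Equiv.Perm (List X)) : Prop :=
  ∀ w : List X, g (v ++ w) = g v ++ h w

namespace IsSection

variable {g g' h h' : Equiv.Perm (List X)} {v : List X}

theorem one (v : List X) : IsSection 1 v 1 := fun _ => rfl

theorem mul (hg : IsSection g (g' v) h) (hg' : IsSection g' v h') :
    IsSection (g * g') v (h * h') := fun w => by
  simp only [Equiv.Perm.mul_apply, hg' w, hg (h' w)]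

theorem inv (hg : IsSection g v h) : IsSection g⁻¹ (g v) h⁻¹ := fun w => by
  simp only [Equiv.Perm.coe_inv, Equiv.symm_apply_apply, Equiv.symm_apply_eq, hg (h.symm w),
    Equiv.apply_symm_apply]

end IsSection

theorem exists_isSection_of_eq_act (A : Mealy S X) {f : Equiv.Perm (List X)} {s : S}
    (hf : ∀ v, f v = A.act s v) (v : List X) :
    ∃ h, IsSection f v h ∧ ∀ w, h w = A.act (A.sec s v) w := by
  have hs : Function.Bijective (A.act s) := funext hf ▸ f.bijective
  refine ⟨.ofBijective _ (A.bijective_act_sec hs v), fun w => ?_, fun _ => rfl⟩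
  rw [hf, hf, act_append, Equiv.ofBijective_apply]

theorem eq_of_forall_isSection {g g' : Equiv.Perm (List X)} {n : ℕ}
    (hshort : ∀ v : List X, v.length ≤ n → g v = g' v)
    (hsec : ∀ v : List X, v.length = n → ∃ h, IsSection g v h ∧ IsSection g' v h) : g = g' := by
  ext1 v
  rcases le_total v.length n with hv | hv
  · exact hshort v hv
  · have hlen : (v.take n).length = n := List.length_take_of_le hv
    obtain ⟨h, hg, hg'⟩ := hsec _ hlen
    rw [← List.take_append_drop n v, hg, hg', hshort _ hlen.le]

/-- The group of length-preserving permutations of `X^*` having a section in `H` at every word of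
length `n`. -/
def sectionsIn (H : Subgroup (Equiv.Perm (List X))) (n : ℕ) :
    Subgroup (Equiv.Perm (List X)) where
  carrier := { g | (∀ v, (g v).length = v.length) ∧ ∀ v, v.length = n → ∃ h ∈ H, IsSection g v h }
  one_mem' := ⟨fun _ => rfl, fun v _ => ⟨1, H.one_mem, .one v⟩⟩
  mul_mem' := by
    rintro g g' ⟨hg_len, hg⟩ ⟨hg'_len, hg'⟩
    refine ⟨fun v => (hg_len _).trans (hg'_len v), fun v hv => ?_⟩
    obtain ⟨h', h'_mem, hh'⟩ := hg' v hv
    obtain ⟨h, h_mem, hh⟩ := hg (g' v) ((hg'_len v).trans hv)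
    exact ⟨h * h', H.mul_mem h_mem h'_mem, hh.mul hh'⟩
  inv_mem' := by
    rintro g ⟨hg_len, hg⟩
    have hinv_len (v : List X) : (g⁻¹ v).length = v.length := by
      rw [← hg_len, Equiv.Perm.coe_inv, Equiv.apply_symm_apply]
    refine ⟨hinv_len, fun v hv => ?_⟩
    obtain ⟨h, h_mem, hh⟩ := hg (g⁻¹ v) ((hinv_len v).trans hv)
    have hsec : IsSection g⁻¹ v h⁻¹ := g.apply_symm_apply v ▸ hh.inv
    exact ⟨h⁻¹, H.inv_mem h_mem, hsec⟩

instance finite_sectionsIn [Finite X] (H : Subgroup (Equiv.Perm (List X))) [Finite H] (n : ℕ) :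
    Finite (sectionsIn H n) := by
  have : Finite {v : List X // v.length ≤ n} := (List.finite_length_le X n).to_subtype
  have : Finite {v : List X // v.length = n} := (List.finite_length_eq X n).to_subtype
  have hsec (g : sectionsIn H n) (v : {v : List X // v.length = n}) :
      ∃ h : H, IsSection g.1 v h := by
    obtain ⟨h, h_mem, hh⟩ := g.2.2 v v.2
    exact ⟨⟨h, h_mem⟩, hh⟩
  choose sectionAt hsectionAt using hsec
  let restrict (g : sectionsIn H n) (v : {v : List X // v.length ≤ n}) :
      {v : List X // v.length ≤ n} := ⟨g.1 v, (g.2.1 v).trans_le v.2⟩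
  refine Finite.of_injective (fun g => (restrict g, sectionAt g)) fun g g' hgg' => ?_
  obtain ⟨hrestrict, hsections⟩ := Prod.mk.inj hgg'
  refine Subtype.ext (eq_of_forall_isSection (n := n) (fun v hv => ?_) fun v hv => ?_)
  · exact congrArg Subtype.val (congrFun hrestrict ⟨v, hv⟩)
  · exact ⟨sectionAt g ⟨v, hv⟩, hsectionAt g ⟨v, hv⟩, hsections ▸ hsectionAt g' ⟨v, hv⟩⟩

end Sections

section Subautomaton

variable (A : Mealy S X) {T : Set S} (hT : ∀ s ∈ T, ∀ x : X, (A.step s x).2 ∈ T)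

theorem autGroup_subautomaton_le : (A.subautomaton T hT).autGroup ≤ A.autGroup := by
  refine Subgroup.closure_mono ?_
  rintro f ⟨s, hf⟩
  exact ⟨s, fun v => (hf v).trans (A.act_subautomaton hT s v)⟩

theorem autGroup_le_sectionsIn_subautomaton {n : ℕ}
    (hn : ∀ (s : S) (v : List X), v.length = n → A.sec s v ∈ T) :
    A.autGroup ≤ sectionsIn (A.subautomaton T hT).autGroup n := by
  refine (Subgroup.closure_le _).2 ?_
  rintro f ⟨s, hf⟩
  refine ⟨fun v => by rw [hf, length_act], fun v hv => ?_⟩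
  obtain ⟨h, hsec, hact⟩ := A.exists_isSection_of_eq_act hf v
  let t : T := ⟨A.sec s v, hn s v hv⟩
  have h_mem : h ∈ (A.subautomaton T hT).autGroup :=
    Subgroup.subset_closure ⟨t, fun w => (hact w).trans (A.act_subautomaton hT t w).symm⟩
  exact ⟨h, h_mem, hsec⟩

theorem finite_autGroup_iff_finite_subautomaton [Finite X] {n : ℕ}
    (hn : ∀ (s : S) (v : List X), v.length = n → A.sec s v ∈ T) :
    Finite A.autGroup ↔ Finite (A.subautomaton T hT).autGroup := by
  refine ⟨fun _ => ?_, fun _ => ?_⟩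
  · exact .of_injective _ (Subgroup.inclusion_injective (A.autGroup_subautomaton_le hT))
  · exact .of_injective _
      (Subgroup.inclusion_injective (A.autGroup_le_sectionsIn_subautomaton hT hn))

end Subautomaton

end Mealy

theorem finite_iff_finite_circuitPart_general {S X : Type*} [Finite S] [Finite X]
    (A : Mealy S X) : Finite A.autGroup ↔ Finite A.circuitPart.autGroup := by
  have := Fintype.ofFinite S
  have hclosed (s : S) (hs : s ∈ A.circuitStates) (x : X) : (A.step s x).2 ∈ A.circuitStates :=
    A.sec_mem_circuitStates hs [x]
  have hcircuit : A.circuitPart = A.subautomaton A.circuitStates hclosed := rfl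
  rw [hcircuit]
  exact A.finite_autGroup_iff_finite_subautomaton hclosed fun s _ hv =>
    A.sec_mem_circuitStates_of_card_le_length s hv.ge

/-- For a finite invertible automaton `A`, the group `G_A` is finite
iff the group generated by the circuit part `C(A)` is finite. -/
theorem finite_iff_finite_circuitPart {S X : Type*} [Fintype S] [Fintype X]
    (hX : 2 ≤ Fintype.card X) (A : Mealy S X) (hInv : A.Invertible) :
    Finite A.autGroup ↔ Finite A.circuitPart.autGroup :=
  finite_iff_finite_circuitPart_general A
end

section
/- Let G be a finitely generated group acting faithfully on a set Ω, and suppose there is a constant C such that every G-orbit in Ω has at most C elements. Then G is finite. -/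
/-!
Let `M` be a finitely generated monoid. A homomorphism from `M` to a finite monoid `N` is
determined by its values on a finite generating set, so there are only finitely many of them. Hence
`M` is finite as soon as its homomorphisms to finitely many finite monoids separate its points: each
element is determined by the tuple of its values. If `M` acts faithfully with orbits of size at
most `C`, the actions of `M` on single orbits separate points, and after numbering its points an
orbit of size `n ≤ C` gives a homomorphism `M →* Function.End (Fin n)`.
-/

section

variable {M : Type*} [Monoid M]

theorem finite_monoidHom_of_fg (hM : Monoid.FG M) (N : Type*) [MulOneClass N] [Finite N] :
    Finite (M →* N) := by
  obtain ⟨S, hS, hfin⟩ := Monoid.fg_iff.mp hM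
  have : Finite S := hfin
  refine Finite.of_injective (fun (f : M →* N) (s : S) ↦ f s) fun f f' h ↦ ?_
  exact MonoidHom.eq_of_eqOn_denseM hS fun s hs ↦ congrFun h ⟨s, hs⟩

theorem finite_of_fg_of_monoidHom_separating (hM : Monoid.FG M) {ι : Type*} [Finite ι]
    (N : ι → Type*) [∀ i, MulOneClass (N i)] [∀ i, Finite (N i)]
    (hsep : ∀ x y : M, (∀ (i) (f : M →* N i), f x = f y) → x = y) : Finite M := by
  have (i : ι) : Finite (M →* N i) := finite_monoidHom_of_fg hM (N i)
  refine Finite.of_injective (fun (x : M) (i : ι) (f : M →* N i) ↦ f x) fun x y hxy ↦ ?_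
  exact hsep x y fun i f ↦ congrFun (congrFun hxy i) f

theorem smul_eq_smul_of_forall_monoidHom_end_eq {α β : Type*} [MulAction M α] (e : α ≃ β)
    {x y : M} (hxy : ∀ f : M →* Function.End β, f x = f y) (a : α) : x • a = y • a := by
  let : MulAction M β := e.symm.mulAction M
  have h : x • e a = y • e a := congrFun (hxy MulAction.toEndHom) (e a)
  simpa only [Equiv.smul_def, Equiv.symm_symm, Equiv.symm_apply_apply, e.injective.eq_iff] using h

theorem finite_of_uniformly_bounded_orbits_general {Ω : Type*} [MulAction M Ω] [FaithfulSMul M Ω]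
    (hM : Monoid.FG M) (C : ℕ)
    (hC : ∀ ω : Ω, (MulAction.orbit M ω).Finite ∧ (MulAction.orbit M ω).ncard ≤ C) :
    Finite M := by
  have (n : Fin (C + 1)) : Finite (Function.End (Fin n)) := inferInstanceAs (Finite (Fin n → Fin n))
  refine finite_of_fg_of_monoidHom_separating hM (fun n : Fin (C + 1) ↦ Function.End (Fin n))
    fun x y hxy ↦ FaithfulSMul.eq_of_smul_eq_smul fun ω : Ω ↦ ?_
  obtain ⟨hfin, hcard⟩ := hC ω
  have : Finite (MulAction.orbit M ω) := hfin
  let e : MulAction.orbit M ω ≃ Fin (MulAction.orbit M ω).ncard := Finite.equivFin _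
  have horbit : ∀ a : MulAction.orbit M ω, x • a = y • a :=
    smul_eq_smul_of_forall_monoidHom_end_eq e (hxy ⟨_, Nat.lt_succ_of_le hcard⟩)
  exact congrArg Subtype.val (horbit ⟨ω, MulAction.mem_orbit_self ω⟩)

end

/-- A finitely generated group acting faithfully with uniformly bounded
orbits is finite. -/
theorem finite_of_uniformly_bounded_orbits {G Ω : Type*} [Group G] [MulAction G Ω]
    [FaithfulSMul G Ω] (hfg : Group.FG G) (C : ℕ)
    (hC : ∀ ω : Ω, (MulAction.orbit G ω).Finite ∧ (MulAction.orbit G ω).ncard ≤ C) :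
    Finite G := by
  exact finite_of_uniformly_bounded_orbits_general (Group.fg_iff_monoid_fg.mp hfg) C hC
end

section
/- Let A be a Mealy automaton over X, let s be a state of A that is reachable by a directed path from some directed cycle of A, and let v be a finite word such that the section s|_v is a non-trivial state. Then v is a post-critical word. -/
theorem exists_descending_chain_of_transGen_self {α : Type*} {r : α → α → Prop} {a b : α}
    (hcycle : Relation.TransGen r a a) (hab : Relation.ReflTransGen r a b) :
    ∃ f : ℕ → α, f 0 = b ∧ ∀ n, r (f (n + 1)) (f n) := by
  have not_acc_a : ¬Acc (Relation.TransGen r) a :=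
    not_acc_iff_exists_descending_chain.2 ⟨fun _ => a, rfl, fun _ => hcycle⟩
  have not_acc_b : ¬Acc r b := fun hb =>
    not_acc_a (hb.inv_of_transGen (hcycle.trans_left hab)).transGen
  exact not_acc_iff_exists_descending_chain.1 not_acc_b

namespace Mealy

variable {S X : Type*} {A : Mealy S X} {s : S} {σ : ℕ → S} {inp : ℕ → X}

/-- A left-infinite directed path `… → σ 1 → σ 0` in `A`, whose edge from `σ (n + 1)` to `σ n` has
input label `inp n`; the indexing is that of `IsPostCritical`. The output labels are determined by
`σ` and `inp` and are not recorded. -/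
def IsLeftInfinitePath (A : Mealy S X) (σ : ℕ → S) (inp : ℕ → X) : Prop :=
  ∀ n, (A.step (σ (n + 1)) (inp n)).2 = σ n

theorem sec_append (A : Mealy S X) (s : S) (u v : List X) :
    A.sec s (u ++ v) = A.sec (A.sec s u) v := by
  induction u generalizing s with
  | nil => rfl
  | cons x _ ih => exact ih (A.step s x).2

theorem lsuffix_succ (p : ℕ → X) (n : ℕ) :
    lsuffix p (n + 1) = lsuffix (fun k => p (k + 1)) n ++ [p 0] := by
  simp [lsuffix, List.range_succ_eq_map, Function.comp_def]

theorem exists_isLeftInfinitePath_of_mem_circuitStates (hs : s ∈ A.circuitStates) :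
    ∃ σ inp, A.IsLeftInfinitePath σ inp ∧ σ 0 = s := by
  obtain ⟨t, ⟨x, hxt⟩, hts⟩ := hs
  obtain ⟨σ, hσ₀, hσ⟩ :=
    exists_descending_chain_of_transGen_self (Relation.TransGen.head' ⟨x, rfl⟩ hxt) hts
  choose inp hinp using hσ
  exact ⟨σ, inp, hinp, hσ₀⟩

namespace IsLeftInfinitePath

theorem isPostCritical (hσ : A.IsLeftInfinitePath σ inp) (h : ¬A.IsTrivialState (σ 0)) :
    A.IsPostCritical inp :=
  ⟨σ, inp, fun n => (A.step (σ (n + 1)) (inp n)).1, fun n => Prod.ext rfl (hσ n), h, Or.inl rfl⟩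

theorem exists_step (hσ : A.IsLeftInfinitePath σ inp) (x : X) :
    ∃ σ' inp', A.IsLeftInfinitePath σ' inp' ∧ σ' 0 = (A.step (σ 0) x).2 ∧
      inp' 0 = x ∧ ∀ n, inp' (n + 1) = inp n := by
  refine ⟨fun n => n.casesOn (A.step (σ 0) x).2 σ, fun n => n.casesOn x inp, ?_, rfl, rfl,
    fun _ => rfl⟩
  rintro (_ | n)
  · rfl
  · exact hσ n

theorem exists_sec (hσ : A.IsLeftInfinitePath σ inp) (v : List X) :
    ∃ σ' inp', A.IsLeftInfinitePath σ' inp' ∧ σ' 0 = A.sec (σ 0) v ∧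
      v = lsuffix inp' v.length := by
  induction v using List.reverseRecOn with
  | nil => exact ⟨σ, inp, hσ, rfl, rfl⟩
  | append_singleton v x ih =>
    obtain ⟨τ, w, hτ, hτ₀, hv⟩ := ih
    obtain ⟨σ', inp', hσ', hσ'₀, hx, hw⟩ := hτ.exists_step x
    refine ⟨σ', inp', hσ', ?_, ?_⟩
    · rw [hσ'₀, hτ₀, sec_append]
      rfl
    · rw [List.length_append, List.length_singleton, lsuffix_succ, funext hw, ← hv, hx]

end IsLeftInfinitePath

end Mealy

theorem postCriticalWord_of_section_nontrivial_general {S X : Type*} {A : Mealy S X}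
    {σ : ℕ → S} {inp : ℕ → X} (hσ : A.IsLeftInfinitePath σ inp) (v : List X)
    (h : ¬A.IsTrivialState (A.sec (σ 0) v)) :
    A.IsPostCriticalWord v := by
  obtain ⟨σ', inp', hσ', hσ'₀, hv⟩ := hσ.exists_sec v
  exact ⟨inp', hσ'.isPostCritical (hσ'₀ ▸ h), hv⟩

/-- If a state `s` is reachable from a directed cycle and `s|_v` is a
non-trivial state, then `v` is a post-critical word. -/
theorem postCriticalWord_of_section_nontrivial {S X : Type*} [Fintype S] [Fintype X]
    (hX : 2 ≤ Fintype.card X) (A : Mealy S X) (s : S) (hs : s ∈ A.circuitStates)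
    (v : List X) (h : ¬A.IsTrivialState (A.sec s v)) :
    A.IsPostCriticalWord v := by
  obtain ⟨σ, inp, hσ, rfl⟩ := Mealy.exists_isLeftInfinitePath_of_mem_circuitStates hs
  exact postCriticalWord_of_section_nontrivial_general hσ v h
end

section
/- Let A be a bounded invertible Mealy automaton over X with A = C(A) and nonempty post-critical set 𝒫. For p ∈ 𝒫 and n ≥ 0 let p_n denote the length-n suffix of p. Then: (a) for all p, q ∈ 𝒫 and all n ≥ 0, if p_{n+1} and q_{n+1} are e-equivalent, then p_n and q_n are e-equivalent (the induced partitions Π_n of 𝒫 form a sequence of refinements); (b) consequently, the sequence of equivalence relations ~_n on 𝒫 given by p ~_n q iff p_n and q_n are e-equivalent eventually stabilizes, and at most |𝒫| distinct relations occur among the ~_n. -/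
/-!
Deleting the first letter of both words turns a generating pair `v ≈ u` of `e`-equivalence into
another generating pair or into an equality, because `s|_{xv} = (s|_x)|_v`. The level-`n` relation
therefore only gets finer as `n` grows. On a finite set a strictly finer equivalence relation has
strictly more classes, and the number of classes of a relation on a nonempty set `P` lies
between `1` and `|P|`.
-/

section Setoid

variable {α β : Type*}

theorem injOn_of_isChain_of_strictAnti [PartialOrder α] [Preorder β] {f : α → β}
    (hf : StrictAnti f) {C : Set α} (hC : IsChain (· ≤ ·) C) : Set.InjOn f C := by
  intro a ha b hb hab
  by_contra hne
  rcases hC ha hb hne with h | h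
  · exact (hf (h.lt_of_ne hne)).ne' hab
  · exact (hf (h.lt_of_ne' hne)).ne hab

theorem strictAnti_card_quotient [Finite α] :
    StrictAnti fun s : Setoid α => Nat.card (Quotient s) := by
  intro s t hst
  have hsurj : Function.Surjective (Setoid.map_of_le hst.le) :=
    Quotient.ind fun a => ⟨Quotient.mk s a, rfl⟩
  refine (Nat.card_le_card_of_surjective _ hsurj).lt_of_ne fun hcard => hst.not_ge ?_
  have hbij : Function.Bijective (Setoid.map_of_le hst.le) :=
    (Nat.bijective_iff_surjective_and_card _).2 ⟨hsurj, hcard.symm⟩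
  exact fun a b hab => Quotient.exact (hbij.1 (Quotient.sound hab))

theorem ncard_le_card_of_isChain_setoid [Finite α] [Nonempty α] {C : Set (Setoid α)}
    (hC : IsChain (· ≤ ·) C) : C.ncard ≤ Nat.card α := by
  have card_mem_Icc (s : Setoid α) : Nat.card (Quotient s) ∈ Set.Icc 1 (Nat.card α) :=
    have : Nonempty (Quotient s) := .map (Quotient.mk s) ‹_›
    ⟨Nat.card_pos, Nat.card_le_card_of_surjective _ Quotient.mk_surjective⟩
  calc C.ncard ≤ (Set.Icc 1 (Nat.card α)).ncard :=
        Set.ncard_le_ncard_of_injOn _ (fun s _ => card_mem_Icc s)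
          (injOn_of_isChain_of_strictAnti strictAnti_card_quotient hC)
    _ = Nat.card α := by rw [Set.ncard_Icc_nat, Nat.add_sub_cancel]

theorem finite_setoid [Finite α] : Finite (Setoid α) :=
  Finite.of_injective (fun s : Setoid α => ⇑s) fun _ _ => Setoid.eq_iff_rel_eq.2

end Setoid

namespace Mealy

variable {S X : Type*} {A : Mealy S X}

theorem eequiv_tail_act {s : S} {v : List X} (h : A.IsTrivialState (A.sec s v)) :
    A.EEquiv v.tail (A.act s v).tail := by
  cases v with
  | nil => exact .refl _
  | cons x v => exact .rel _ _ ⟨(A.step s x).2, .inl ⟨h, rfl⟩⟩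

theorem ERel.eequiv_tail {v u : List X} : A.ERel v u → A.EEquiv v.tail u.tail := by
  rintro ⟨s, ⟨h, rfl⟩ | ⟨h, rfl⟩⟩
  · exact eequiv_tail_act h
  · exact .symm _ _ (eequiv_tail_act h)

theorem EEquiv.tail {v u : List X} (h : A.EEquiv v u) : A.EEquiv v.tail u.tail :=
  Setoid.eqvGen_le (s := (Relation.EqvGen.setoid A.ERel).comap List.tail)
    (fun _ _ => ERel.eequiv_tail) h

theorem tail_lsuffix_succ (p : ℕ → X) (n : ℕ) : (lsuffix p (n + 1)).tail = lsuffix p n := by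
  simp [lsuffix, List.range_succ]

theorem EEquiv.of_lsuffix_succ {p q : ℕ → X} {n : ℕ}
    (h : A.EEquiv (lsuffix p (n + 1)) (lsuffix q (n + 1))) :
    A.EEquiv (lsuffix p n) (lsuffix q n) := by
  simpa only [tail_lsuffix_succ] using h.tail

/-- The relation `~ₙ` on a set `P` of left-infinite sequences: `e`-equivalence of their suffixes
of length `n`. The set `P` is arbitrary; the post-critical set is the case of interest. -/
def levelSetoid (A : Mealy S X) (P : Set (ℕ → X)) (n : ℕ) : Setoid P :=
  (Relation.EqvGen.setoid A.ERel).comap fun p => lsuffix p.1 n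

theorem antitone_levelSetoid (A : Mealy S X) (P : Set (ℕ → X)) : Antitone (A.levelSetoid P) :=
  antitone_nat_of_succ_le fun _ _ _ => EEquiv.of_lsuffix_succ

theorem exists_forall_ge_levelSetoid_eq (A : Mealy S X) {P : Set (ℕ → X)} (hP : P.Finite) :
    ∃ N, ∀ n, N ≤ n → A.levelSetoid P n = A.levelSetoid P N := by
  have := hP.to_subtype
  have := finite_setoid (α := P)
  obtain ⟨N, hN⟩ := WellFoundedLT.antitone_chain_condition (A.antitone_levelSetoid P)
  exact ⟨N, fun n hn => (hN n hn).symm⟩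

theorem ncard_range_levelSetoid_le (A : Mealy S X) {P : Set (ℕ → X)} (hfin : P.Finite)
    (hne : P.Nonempty) : (Set.range (A.levelSetoid P)).ncard ≤ P.ncard := by
  have := hfin.to_subtype
  have := hne.to_subtype
  exact ncard_le_card_of_isChain_setoid (A.antitone_levelSetoid P).isChain_range

end Mealy

theorem partitions_refine_and_stabilize_general {S X : Type*} (A : Mealy S X)
    {P : Set (ℕ → X)} (hfin : P.Finite) (hne : P.Nonempty) :
    (∀ (p q : ℕ → X) (n : ℕ),
        A.EEquiv (Mealy.lsuffix p (n + 1)) (Mealy.lsuffix q (n + 1)) →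
          A.EEquiv (Mealy.lsuffix p n) (Mealy.lsuffix q n)) ∧
    (∃ N : ℕ, ∀ n : ℕ, N ≤ n →
        (fun p q : P => A.EEquiv (Mealy.lsuffix p.1 n) (Mealy.lsuffix q.1 n)) =
          fun p q : P => A.EEquiv (Mealy.lsuffix p.1 N) (Mealy.lsuffix q.1 N)) ∧
    { r : P → P → Prop |
        ∃ n : ℕ, r = fun p q =>
          A.EEquiv (Mealy.lsuffix p.1 n) (Mealy.lsuffix q.1 n) }.ncard ≤ P.ncard := by
  refine ⟨fun _ _ _ => Mealy.EEquiv.of_lsuffix_succ, ?_, ?_⟩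
  · obtain ⟨N, hN⟩ := A.exists_forall_ge_levelSetoid_eq hfin
    exact ⟨N, fun n hn => Setoid.eq_iff_rel_eq.1 (hN n hn)⟩
  · have hrel : { r : P → P → Prop | ∃ n : ℕ, r = fun p q =>
          A.EEquiv (Mealy.lsuffix p.1 n) (Mealy.lsuffix q.1 n) } =
        (fun s : Setoid P => ⇑s) '' Set.range (A.levelSetoid P) := by
      rw [← Set.range_comp]
      exact Set.ext fun r => exists_congr fun n => eq_comm
    rw [hrel, Set.ncard_image_of_injective _ fun _ _ => Setoid.eq_iff_rel_eq.2]
    exact A.ncard_range_levelSetoid_le hfin hne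

/-- (a) the partitions of the post-critical set induced by the `e`-orbits
form a sequence of refinements; (b) the induced sequence of equivalence relations
eventually stabilizes, and at most `|𝒫|` distinct relations occur. -/
theorem partitions_refine_and_stabilize {S X : Type*} [Fintype S] [Fintype X]
    (hX : 2 ≤ Fintype.card X) (A : Mealy S X) (hInv : A.Invertible)
    (hBdd : A.Bounded) (hCA : ∀ s : S, s ∈ A.circuitStates)
    (hP : A.PostCriticalSet.Nonempty) :
    (∀ p ∈ A.PostCriticalSet, ∀ q ∈ A.PostCriticalSet, ∀ n : ℕ,
        A.EEquiv (Mealy.lsuffix p (n + 1)) (Mealy.lsuffix q (n + 1)) →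
          A.EEquiv (Mealy.lsuffix p n) (Mealy.lsuffix q n)) ∧
    (∃ N : ℕ, ∀ n : ℕ, N ≤ n →
        (fun p q : A.PostCriticalSet =>
            A.EEquiv (Mealy.lsuffix p.1 n) (Mealy.lsuffix q.1 n)) =
          fun p q : A.PostCriticalSet =>
            A.EEquiv (Mealy.lsuffix p.1 N) (Mealy.lsuffix q.1 N)) ∧
    { r : A.PostCriticalSet → A.PostCriticalSet → Prop |
        ∃ n : ℕ, r = fun p q =>
          A.EEquiv (Mealy.lsuffix p.1 n) (Mealy.lsuffix q.1 n) }.ncard ≤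
      A.PostCriticalSet.ncard :=
  let ⟨refines, stabilizes⟩ := partitions_refine_and_stabilize_general A hBdd hP
  ⟨fun p _ q _ => refines p q, stabilizes⟩
end

section
/- Let A be a bounded Mealy automaton over X (i.e., its post-critical set 𝒫 is finite). Then every post-critical sequence …x₃x₂x₁ ∈ 𝒫 is eventually periodic: there exist k ≥ 0 and m ≥ 1 such that x_{n+m} = x_n for all n > k. -/
/-!
Triviality of a state passes forward along transitions, so no state on a path that ends at a
non-trivial state is trivial. Cutting off the end of such a path therefore leaves a path ending at
a non-trivial state: the post-critical set is invariant under deleting the last letters `xₖ…x₁`.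
If it is finite, two of these truncations of a given sequence coincide.
-/

open SymbolicDynamics.FullShift

theorem eventually_periodic_of_finite_range_shift {X : Type*} {p : ℕ → X}
    (hfin : (Set.range fun k ↦ shift k p).Finite) :
    ∃ k m : ℕ, 1 ≤ m ∧ ∀ n, k ≤ n → p (n + m) = p n := by
  obtain ⟨k, l, hkl, hshift⟩ := hfin.exists_lt_map_eq_of_forall_mem Set.mem_range_self
  obtain ⟨m, hm, rfl⟩ := exists_pos_add_of_lt' hkl
  refine ⟨k, m, hm, fun n hn ↦ ?_⟩
  obtain ⟨i, rfl⟩ := Nat.exists_eq_add_of_le hn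
  calc p (k + i + m) = shift (k + m) p i := by rw [shift_apply, add_right_comm]
    _ = shift k p i := (congrFun hshift i).symm
    _ = p (k + i) := shift_apply k p i

namespace Mealy

variable {S X : Type*} {A : Mealy S X}

theorem IsTrivialState.step_snd {s : S} (hs : A.IsTrivialState s) (x : X) :
    A.IsTrivialState (A.step s x).2 :=
  fun v ↦ (List.cons.inj (hs (x :: v))).2

theorem not_isTrivialState_of_path {σ : ℕ → S} {inp out : ℕ → X}
    (hpath : ∀ n, A.step (σ (n + 1)) (inp n) = (out n, σ n)) (hend : ¬A.IsTrivialState (σ 0))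
    (n : ℕ) : ¬A.IsTrivialState (σ n) := by
  induction n with
  | zero => exact hend
  | succ n ih =>
    intro htriv
    have hnext : A.IsTrivialState (A.step (σ (n + 1)) (inp n)).2 := htriv.step_snd (inp n)
    rw [hpath n] at hnext
    exact ih hnext

theorem mapsTo_shift_postCriticalSet (A : Mealy S X) (k : ℕ) :
    Set.MapsTo (shift k) A.PostCriticalSet A.PostCriticalSet := by
  rintro p ⟨σ, inp, out, hpath, hend, hlabel⟩
  exact ⟨shift k σ, shift k inp, shift k out, fun n ↦ hpath (k + n),
    not_isTrivialState_of_path hpath hend k,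
    hlabel.imp (congrArg (shift k)) (congrArg (shift k))⟩

end Mealy

theorem postCritical_eventually_periodic_general {S X : Type*} (A : Mealy S X) (hBdd : A.Bounded) :
    ∀ p ∈ A.PostCriticalSet, ∃ k m : ℕ, 1 ≤ m ∧ ∀ n : ℕ, k ≤ n → p (n + m) = p n := by
  intro p hp
  have hshift : Set.range (fun k ↦ shift k p) ⊆ A.PostCriticalSet :=
    Set.range_subset_iff.mpr fun k ↦ A.mapsTo_shift_postCriticalSet k hp
  exact eventually_periodic_of_finite_range_shift (hBdd.subset hshift)

/-- Every post-critical sequence of a bounded automaton is eventually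
periodic. (Here `p j` encodes the letter `x_{j+1}` of the sequence `…x₃x₂x₁`.) -/
theorem postCritical_eventually_periodic {S X : Type*} [Fintype S] [Fintype X]
    (hX : 2 ≤ Fintype.card X) (A : Mealy S X) (hBdd : A.Bounded) :
    ∀ p ∈ A.PostCriticalSet, ∃ k m : ℕ, 1 ≤ m ∧ ∀ n : ℕ, k ≤ n → p (n + m) = p n :=
  postCritical_eventually_periodic_general A hBdd
end
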